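/- Let ν = 2, c_R = c_W, and set c := 2c_W − n. Assume c ≥ 3, n ≥ ⌈7c/3⌉ + 4, that (n−c)/4 is an integer, and that h ≤ (n−c)/4. Then every (n, c_W, c_W, 2, h, 2^K, q) multi-version code with side information (for two independent K-bit versions) satisfies both q^{⌈2c/3⌉} ≥ 2^K and q^{2c−⌊2c/3⌋} ≥ 2^{2K}; equivalently, its storage cost satisfies log₂ q ≥ max{ K/⌈2c/3⌉ , 2K/(2c−⌊2c/3⌋) }. -/

import Mathlib

open Finset

/-- The `h`-hop neighborhood `H_i = {i-h, …, i+h}` of server `i` on the ring `ZMod n`. -/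
noncomputable def nbhd (n h : ℕ) (i : ZMod n) : Finset (ZMod n) :=
  (Finset.Icc (-(h : ℤ)) (h : ℤ)).image (fun d : ℤ => (i + (d : ZMod n)))

/-- The set `A_S(u)` of servers that received version `u` in state `S`. -/
def received (n ν : ℕ) [NeZero n] (S : ZMod n → Finset (Fin ν)) (u : Fin ν) :
    Finset (ZMod n) :=
  Finset.univ.filter (fun j => u ∈ S j)

/-- An `(n, c_W, c_R, ν, h, 2^K, q)` multi-version code with side information.
Servers are indexed by `ZMod n`, versions by `Fin ν` (higher index = later version),
message values are `K`-bit strings `Fin K → Bool`, and stored symbols lie in `Fin q`.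
The encoder of server `i` may depend only on the states of the servers in its
`h`-hop neighborhood and on the values of the versions that server `i` received;
the decoder for a set `T` of `c_R` servers may depend only on the symbols stored by
the servers of `T`, and must return the value of some version at least as late as the
latest complete version whenever a complete version exists (and `NULL`, i.e. `none`,
otherwise). -/
structure MVCode (n cW cR ν h K q : ℕ) [NeZero n] where
  enc : ZMod n → (ZMod n → Finset (Fin ν)) → (Fin ν → (Fin K → Bool)) → Fin q
  dec : (ZMod n → Finset (Fin ν)) → Finset (ZMod n) → (ZMod n → Fin q) →
    Option (Fin K → Bool)
  enc_local_state : ∀ (i : ZMod n) (S S' : ZMod n → Finset (Fin ν))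
      (W : Fin ν → Fin K → Bool),
    (∀ j ∈ nbhd n h i, S j = S' j) → enc i S W = enc i S' W
  enc_local_word : ∀ (i : ZMod n) (S : ZMod n → Finset (Fin ν))
      (W W' : Fin ν → Fin K → Bool),
    (∀ u ∈ S i, W u = W' u) → enc i S W = enc i S W'
  dec_local : ∀ (S : ZMod n → Finset (Fin ν)) (T : Finset (ZMod n))
      (X X' : ZMod n → Fin q),
    (∀ j ∈ T, X j = X' j) → dec S T X = dec S T X'
  dec_correct : ∀ (S : ZMod n → Finset (Fin ν)) (W : Fin ν → Fin K → Bool)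
      (T : Finset (ZMod n)), T.card = cR →
    (∃ u : Fin ν, cW ≤ (received n ν S u).card) →
    ∃ m : Fin ν, (∀ u : Fin ν, cW ≤ (received n ν S u).card → u ≤ m) ∧
      dec S T (fun j => enc j S W) = some (W m)
  dec_null : ∀ (S : ZMod n → Finset (Fin ν)) (W : Fin ν → Fin K → Bool)
      (T : Finset (ZMod n)), T.card = cR →
    (∀ u : Fin ν, (received n ν S u).card < cW) →
    dec S T (fun j => enc j S W) = none

/-!
Call the value of the first version the row and that of the second version the column. In every
state in which only the first version is surely complete, the decoder must return the row or the
column. There are `M = 2 ^ K` rows and columns.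

*Chains* (`c ≥ 4`). Let the second version spread from `2 m` to `c + 2 m` servers one by one, where
`n = c + 4 m`. The output moves from the row to the column, so every pair is decoded as its row in
some state and as its column in the next one. The `c` servers in the middle are too far from the
border of the second version to know the state, so the symbols of at most `c + 1` servers determine
all pairs switching at a given step. Counting pairs gives `M ^ 2 ≤ c * q ^ (c + 1)`, which yields
`M ^ 2 ≤ q ^ (2 * c - 2 * c / 3)` except when `c = 3`.

*Three servers* (`c = 3`). Here `M ≤ q ^ 2` is needed. Let three inner servers hold both versions,
while servers `Y` and `Z` out of their reach hold only the first one, so that their letters depend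
on the row alone. If `M > q ^ 2`, two rows share both letters and lie in a class of more than `q`
rows with the same `Y`. Rows sharing a decoder compete for its letters, so few pairs of letters of
two inner servers are read as the row. By the Loomis–Whitney inequality there are few columns in
which all three pairs are, and the letters of the single inner servers, for which the two rows
compete, bound the number of the other columns. As a result `q ^ 2 < M < q ^ 2 + q` fails for all
powers of two `M`.
-/

section Counting

variable {ι α β γ : Type*}

/-- The discrete Loomis–Whitney inequality for a family of points `(f c, g c, k c)`. -/
theorem sq_card_le_card_image_mul [DecidableEq α] [DecidableEq β] [DecidableEq γ] (C : Finset ι)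
    (f : ι → α) (g : ι → β) (k : ι → γ) (hinj : Set.InjOn (fun c ↦ (f c, g c, k c)) C) :
    #C ^ 2 ≤ #(C.image fun c ↦ (f c, g c)) * #(C.image fun c ↦ (f c, k c)) *
      #(C.image fun c ↦ (g c, k c)) := by
  set FG := C.image fun c ↦ (f c, g c)
  set FK := C.image fun c ↦ (f c, k c)
  set GK := C.image fun c ↦ (g c, k c)
  have card_FG : #FG = ∑ a ∈ C.image f, #{p ∈ FG | p.1 = a} :=
    card_eq_sum_card_fiberwise fun p hp ↦ by grind
  have card_FK : #FK = ∑ a ∈ C.image f, #{p ∈ FK | p.1 = a} :=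
    card_eq_sum_card_fiberwise fun p hp ↦ by grind
  have fiber_le_mul (a : α) : #{c ∈ C | f c = a} ≤ #{p ∈ FG | p.1 = a} * #{p ∈ FK | p.1 = a} := by
    rw [← card_product]
    exact card_le_card_of_injOn (fun c ↦ ((f c, g c), (f c, k c)))
      (fun c hc ↦ by simp_all; grind)
      (fun c hc c' hc' h ↦ hinj (by simp_all) (by simp_all) (by simp_all))
  have fiber_le (a : α) : #{c ∈ C | f c = a} ≤ #GK :=
    card_le_card_of_injOn (fun c ↦ (g c, k c)) (fun c hc ↦ by grind)
      (fun c hc c' hc' h ↦ hinj (by simp_all) (by simp_all) (by simp_all))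
  rw [card_eq_sum_card_image f C, card_FG, card_FK, mul_right_comm, sum_mul]
  refine sum_sq_le_sum_mul_sum_of_sq_le_mul _ (fun _ _ ↦ zero_le) (fun _ _ ↦ zero_le) fun a _ ↦ ?_
  rw [sq, mul_right_comm]
  exact Nat.mul_le_mul (fiber_le_mul a) (fiber_le a)

end Counting

section Rows

variable {V α : Type*} [DecidableEq V]

/-- A decoder `d` serves the row `u` of the table `x` of letters if from the letter in column `c` it
always returns `u` or `c`: here `u` is the value of the first version and `c` that of the second. -/
def DecodesRow (d : α → Option V) (u : V) (x : V → α) : Prop :=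
  ∀ c, d (x c) = some u ∨ d (x c) = some c

/-- The letters which the decoder `d` interprets as the value `v`. -/
def lettersOf [Fintype α] (d : α → Option V) (v : V) : Finset α := {a | d a = some v}

/-- The values which the decoder `d` returns for some letter. -/
def decodedValues [Fintype V] [Fintype α] (d : α → Option V) : Finset V :=
  {v | (lettersOf d v).Nonempty}

variable [Fintype α] {d : α → Option V} {u v : V} {x : V → α}

@[simp]
lemma mem_lettersOf {a : α} : a ∈ lettersOf d v ↔ d a = some v := by simp [lettersOf]

lemma disjoint_lettersOf (huv : u ≠ v) : Disjoint (lettersOf d u) (lettersOf d v) :=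
  disjoint_left.2 fun a hu hv ↦ huv <| by simp_all

lemma sum_card_lettersOf_le (d : α → Option V) (s : Finset V) :
    ∑ v ∈ s, #(lettersOf d v) ≤ Fintype.card α := by
  classical
  rw [← card_biUnion fun _ _ _ _ huv ↦ disjoint_lettersOf huv]
  exact card_le_univ _

lemma DecodesRow.injOn (hd : DecodesRow d u x) : Set.InjOn x {c | x c ∉ lettersOf d u} := by
  intro c hc c' hc' h
  have hc := (hd c).resolve_left (by simpa using hc)
  have hc' := (hd c').resolve_left (by simpa using hc')
  simp_all

variable [Fintype V]

lemma DecodesRow.lettersOf_nonempty (hd : DecodesRow d u x)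
    (hcard : Fintype.card α < Fintype.card V) : (lettersOf d u).Nonempty := by
  by_contra hempty
  rw [not_nonempty_iff_eq_empty] at hempty
  have hx : Function.Injective x := by simpa [hempty, Set.injOn_univ] using hd.injOn
  exact hcard.not_ge (Fintype.card_le_of_injective x hx)

/-- The column `c` of a row `u` either carries a letter read as `u`, or is itself decoded. -/
lemma DecodesRow.card_lt_mul_add [DecidableEq α] (hd : DecodesRow d u x) {q : ℕ}
    (hx : ∀ a, #{c | x c = a} ≤ q) (hu : (lettersOf d u).Nonempty) :
    Fintype.card V < q * #(lettersOf d u) + #(decodedValues d) := by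
  have hcover : univ ⊆ ({c | x c ∈ lettersOf d u} : Finset V) ∪ (decodedValues d).erase u := by
    intro c _
    by_cases hc : d (x c) = some u
    · simp [hc]
    · have hc' := (hd c).resolve_left hc
      have hcu : c ≠ u := by rintro rfl; exact hc hc'
      have hcd : c ∈ decodedValues d := by
        simpa [decodedValues, Finset.Nonempty] using ⟨x c, hc'⟩
      simp [hcu, hcd]
  have howned : #{c | x c ∈ lettersOf d u} ≤ q * #(lettersOf d u) :=
    card_le_mul_card_image_of_maps_to (fun c hc ↦ by simpa using hc) q fun a _ ↦
      (card_le_card (by grind)).trans (hx a)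
  have hu' : u ∈ decodedValues d := by simpa [decodedValues] using hu
  have := (card_le_card hcover).trans (card_union_le _ _)
  rw [card_univ] at this
  have := card_erase_lt_of_mem hu'
  omega

lemma sum_card_lettersOf_add_card_decodedValues_le {R : Finset V} (hR : R ⊆ decodedValues d) :
    ∑ v ∈ R, #(lettersOf d v) + #(decodedValues d) ≤ #R + Fintype.card α := by
  have hone : #(decodedValues d \ R) ≤ ∑ v ∈ decodedValues d \ R, #(lettersOf d v) := by
    rw [card_eq_sum_ones]
    refine sum_le_sum fun v hv ↦ card_pos.2 ?_
    simp_all [decodedValues]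
  have htotal := sum_card_lettersOf_le d (decodedValues d)
  rw [← sum_sdiff hR] at htotal
  have := card_sdiff_add_card_eq_card hR
  omega

/-- With more columns than letters, many rows sharing one decoder leave few letters to each row:
compare the row with the fewest letters, which forces many values to be decoded, with the total. -/
theorem card_lettersOf_add_card_le [DecidableEq α] {q : ℕ} {R : Finset V} {x : V → V → α}
    (hcard : Fintype.card α < Fintype.card V) (hR : q < #R) (hd : ∀ w ∈ R, DecodesRow d w (x w))
    (hx : ∀ w ∈ R, ∀ a, #{c | x w c = a} ≤ q) (hu : u ∈ R) :
    #(lettersOf d u) + Fintype.card V ≤ Fintype.card α + q := by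
  have hne (w) (hw : w ∈ R) : (lettersOf d w).Nonempty := (hd w hw).lettersOf_nonempty hcard
  obtain ⟨w, hw, hmin⟩ := R.exists_min_image (fun w ↦ #(lettersOf d w)) ⟨u, hu⟩
  have hrow := (hd w hw).card_lt_mul_add (hx w hw) (hne w hw)
  have htotal : ∑ v ∈ R, #(lettersOf d v) + #(decodedValues d) ≤ #R + Fintype.card α :=
    sum_card_lettersOf_add_card_decodedValues_le fun w hw ↦ by simp [decodedValues, hne w hw]
  have hsum : #(lettersOf d u) + (#R - 1) * #(lettersOf d w) ≤ ∑ v ∈ R, #(lettersOf d v) := by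
    rw [← add_sum_erase R _ hu, ← card_erase_of_mem hu, ← smul_eq_mul]
    gcongr
    exact card_nsmul_le_sum _ _ _ fun v hv ↦ hmin v (mem_of_mem_erase hv)
  obtain ⟨p, hp⟩ := Nat.exists_eq_add_of_le' (card_pos.2 (hne w hw))
  obtain ⟨t, ht⟩ := Nat.exists_eq_add_of_lt hR
  rw [hp, ht, Nat.add_sub_cancel] at hsum
  rw [hp] at hrow
  rw [ht] at htotal
  nlinarith [Nat.zero_le (t * p)]

/-- In the row `u`, a letter not read as `u` is not read as `v` either, except in the column `v`. -/
lemma DecodesRow.card_add_card_lettersOf_add_card_lettersOf_le [DecidableEq α]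
    (hd : DecodesRow d u x) (huv : u ≠ v) :
    #{c | x c ∉ lettersOf d u} + #(lettersOf d u) + #(lettersOf d v) ≤ Fintype.card α + 1 := by
  set C : Finset V := {c | x c ∉ lettersOf d u}
  have hC : #(C.erase v) ≤ #(lettersOf d u ∪ lettersOf d v)ᶜ := by
    refine card_le_card_of_injOn x (fun c hc ↦ ?_) (hd.injOn.mono fun c hc ↦ by simp_all [C])
    have hc' := hd c
    simp_all [C]
  have hcompl := card_compl_add_card (lettersOf d u ∪ lettersOf d v)
  rw [card_union_of_disjoint (disjoint_lettersOf huv)] at hcompl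
  have := pred_card_le_card_erase (s := C) (a := v)
  omega

end Rows

section Game

variable {V α ι : Type*}

/-- A column whose pair of letters in the servers `i`, `j` is not read as `u` is determined by that
pair. -/
lemma card_le_of_decodesRow_pairs [Fintype V] [DecidableEq V] [Fintype α] [DecidableEq α]
    [Fintype ι] [LinearOrder ι] {u : V} {x : ι → V → α}
    {d : ι → ι → α × α → Option V}
    (hd : ∀ i j, i < j → DecodesRow (d i j) u fun c ↦ (x i c, x j c)) (O : ι → Finset α) :
    Fintype.card V ≤ ∑ i, #{c | x i c ∉ O i} + ∑ p : ι × ι with p.1 < p.2, #(O p.1) * #(O p.2) +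
      #{c | ∀ p : ι × ι, p.1 < p.2 → (x p.1 c, x p.2 c) ∈ lettersOf (d p.1 p.2) u} := by
  set A : ι → Finset V := fun i ↦ {c | x i c ∉ O i}
  set B : ι × ι → Finset V := fun p ↦
    {c | x p.1 c ∈ O p.1 ∧ x p.2 c ∈ O p.2 ∧ (x p.1 c, x p.2 c) ∉ lettersOf (d p.1 p.2) u}
  set C : Finset V := {c | ∀ p : ι × ι, p.1 < p.2 → (x p.1 c, x p.2 c) ∈ lettersOf (d p.1 p.2) u}
  set pairs : Finset (ι × ι) := {p | p.1 < p.2}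
  have hB (p) (hp : p ∈ pairs) : #(B p) ≤ #(O p.1) * #(O p.2) := by
    rw [← card_product]
    refine card_le_card_of_injOn (fun c ↦ (x p.1 c, x p.2 c)) (fun c hc ↦ by simp_all [B])
      ((hd p.1 p.2 (by simpa [pairs] using hp)).injOn.mono fun c hc ↦ by simp_all [B])
  have hcover : univ ⊆ univ.biUnion A ∪ pairs.biUnion B ∪ C := by
    intro c _
    by_contra h
    simp only [mem_union, mem_biUnion, mem_univ, true_and, mem_filter, A, B, C, pairs, not_or,
      not_exists, not_not, not_and, Prod.forall] at h
    exact h.2 fun i j hij ↦ h.1.2 i j hij (h.1.1 i) (h.1.1 j)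
  calc Fintype.card V ≤ #(univ.biUnion A ∪ pairs.biUnion B ∪ C) := card_le_card hcover
    _ ≤ #(univ.biUnion A) + #(pairs.biUnion B) + #C :=
      (card_union_le _ _).trans (by gcongr; exact card_union_le _ _)
    _ ≤ ∑ i, #(A i) + ∑ p ∈ pairs, #(O p.1) * #(O p.2) + #C := by
      gcongr
      · exact card_biUnion_le
      · exact card_biUnion_le.trans (sum_le_sum hB)

lemma sq_card_columns_le_prod_card_lettersOf [Fintype V] [DecidableEq V] [Fintype α]
    [DecidableEq α] {u : V} {x : Fin 3 → V → α}
    (hinj : Function.Injective fun c i ↦ x i c) (d : Fin 3 → Fin 3 → α × α → Option V) :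
    #{c | ∀ p : Fin 3 × Fin 3, p.1 < p.2 → (x p.1 c, x p.2 c) ∈ lettersOf (d p.1 p.2) u} ^ 2 ≤
      #(lettersOf (d 0 1) u) * #(lettersOf (d 0 2) u) * #(lettersOf (d 1 2) u) := by
  refine (sq_card_le_card_image_mul _ (x 0) (x 1) (x 2) fun c _ c' _ h ↦ hinj ?_).trans ?_
  · ext i
    fin_cases i <;> simp_all
  · set C : Finset V := {c | ∀ p : Fin 3 × Fin 3, p.1 < p.2 →
      (x p.1 c, x p.2 c) ∈ lettersOf (d p.1 p.2) u}
    have himage {i j : Fin 3} (hij : i < j) :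
        #(C.image fun c ↦ (x i c, x j c)) ≤ #(lettersOf (d i j) u) :=
      card_le_card <| image_subset_iff.2 fun c hc ↦ (mem_filter.1 hc).2 (i, j) hij
    exact Nat.mul_le_mul (Nat.mul_le_mul (himage (i := 0) (j := 1) (by decide))
      (himage (i := 0) (j := 2) (by decide))) (himage (i := 1) (j := 2) (by decide))

lemma four_mul_sum_add_le {s : ℕ} (hs : 4 ≤ s) {U p r : Fin 3 → ℕ} (hU : ∀ i, U i + p i + r i ≤ s)
    (hpr : ∑ i, p i ≤ ∑ i, r i) :
    4 * (∑ i, U i + ∑ ij : Fin 3 × Fin 3 with ij.1 < ij.2, p ij.1 * p ij.2) ≤ 3 * s ^ 2 := by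
  have hpairs : ∑ ij : Fin 3 × Fin 3 with ij.1 < ij.2, p ij.1 * p ij.2 =
      p 0 * p 1 + p 0 * p 2 + p 1 * p 2 := by
    simp [sum_filter, Fintype.sum_prod_type, Fin.sum_univ_three]
  rw [hpairs]
  set P := ∑ i, p i with hP
  have hUP : ∑ i, U i + 2 * P ≤ 3 * s := by
    have := sum_le_sum fun i (_ : i ∈ univ) ↦ hU i
    simp only [sum_add_distrib, sum_const, card_univ, Fintype.card_fin, smul_eq_mul] at this
    omega
  have hPsq : 3 * (p 0 * p 1 + p 0 * p 2 + p 1 * p 2) ≤ P ^ 2 := by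
    rw [hP, Fin.sum_univ_three]
    zify
    nlinarith [sq_nonneg ((p 0 : ℤ) - p 1), sq_nonneg ((p 0 : ℤ) - p 2),
      sq_nonneg ((p 1 : ℤ) - p 2)]
  have hconvex : 12 * (3 * s - 2 * P : ℤ) + 4 * P ^ 2 ≤ 9 * s ^ 2 := by
    have h₁ : (0 : ℤ) ≤ 3 * s - 2 * P := by omega
    have h₂ : (0 : ℤ) ≤ 3 * s + 2 * P - 12 := by omega
    linarith [mul_nonneg h₁ h₂]
  zify at *
  linarith

/-- The table of a game with three inner servers `X 0`, `X 1`, `X 2`, whose letters depend on both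
versions `w`, `c` and together determine `c` from `w`, and outer servers `Y`, `Z`, whose letters
depend on `w` only. From two inner servers and `Y`, as well as from one inner server, `Y` and `Z`,
one can always decode `w` or `c`. -/
structure ThreeServerGame (V α : Type*) where
  /-- The inner servers. -/
  X : Fin 3 → V → V → α
  /-- The outer server which supplements two inner ones. -/
  Y : V → α
  /-- The outer server which replaces one of the inner ones. -/
  Z : V → α
  /-- The decoder reading `Y` and two inner servers. -/
  decPair : Fin 3 → Fin 3 → α → α × α → Option V
  /-- The decoder reading `Y`, `Z` and one inner server. -/
  decSingle : Fin 3 → α → α → α → Option V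
  injective_X : ∀ w, Function.Injective fun c i ↦ X i w c
  decodesRow_pair : ∀ i j, i ≠ j → ∀ w,
    DecodesRow (decPair i j (Y w)) w fun c ↦ (X i w c, X j w c)
  decodesRow_single : ∀ i w, DecodesRow (decSingle i (Y w) (Z w)) w (X i w)

namespace ThreeServerGame

variable [Fintype V] [Fintype α]

lemma card_columns_le [DecidableEq α] (G : ThreeServerGame V α) {i j : Fin 3} (hij : i ≠ j)
    (w : V) (a : α × α) :
    #{c | (G.X i w c, G.X j w c) = a} ≤ Fintype.card α := by
  obtain ⟨k, hk⟩ : ∃ k, ∀ l, l = i ∨ l = j ∨ l = k := by decide +revert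
  refine card_le_card_of_injOn (t := univ) (G.X k w) (by simp) fun c hc c' hc' h ↦
    G.injective_X w (funext fun l ↦ ?_)
  obtain ⟨hi, hj⟩ := Prod.ext_iff.1 ((mem_filter_univ c).1 hc |>.trans
    ((mem_filter_univ c').1 hc').symm)
  obtain rfl | rfl | rfl := hk l
  exacts [hi, hj, h]

lemma exists_ne_rows [DecidableEq α] (G : ThreeServerGame V α)
    (hcard : Fintype.card α ^ 2 < Fintype.card V) :
    ∃ u v, u ≠ v ∧ G.Y u = G.Y v ∧ G.Z u = G.Z v ∧ Fintype.card α < #{w | G.Y w = G.Y u} := by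
  obtain ⟨y, -, hy⟩ := exists_lt_card_fiber_of_mul_lt_card_of_maps_to (s := univ) (t := univ)
    (f := G.Y) (n := Fintype.card α) (by simp) (by simpa [sq] using hcard)
  obtain ⟨u, hu, v, hv, huv, hZ⟩ := exists_ne_map_eq_of_card_lt_of_maps_to (t := univ) (f := G.Z)
    (by simpa using hy) (by simp)
  simp only [mem_filter_univ] at hu hv
  exact ⟨u, v, huv, by rw [hu, hv], hZ, by rwa [hu]⟩

lemma card_lettersOf_pair_add_card_le [DecidableEq V] [DecidableEq α] {u : V}
    (G : ThreeServerGame V α) (hcard : Fintype.card α ^ 2 < Fintype.card V)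
    (hu : Fintype.card α < #{w | G.Y w = G.Y u}) {i j : Fin 3} (hij : i ≠ j) :
    #(lettersOf (G.decPair i j (G.Y u)) u) + Fintype.card V ≤
      Fintype.card α ^ 2 + Fintype.card α := by
  have := card_lettersOf_add_card_le (d := G.decPair i j (G.Y u))
    (x := fun w c ↦ (G.X i w c, G.X j w c)) (u := u) (by simpa [← sq] using hcard) hu
    (fun w hw ↦ by simpa [← (mem_filter_univ w).1 hw] using G.decodesRow_pair i j hij w)
    (fun w _ ↦ G.card_columns_le hij w) (by simp)
  simpa [sq] using this

lemma card_lt_sq_add (G : ThreeServerGame V α)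
    (hcard : Fintype.card α ^ 2 < Fintype.card V) :
    Fintype.card V < Fintype.card α ^ 2 + Fintype.card α := by
  classical
  obtain ⟨u, -, -, -, -, hu⟩ := G.exists_ne_rows hcard
  have hij : (0 : Fin 3) ≠ 1 := by decide
  have hpos := (G.decodesRow_pair 0 1 hij u).lettersOf_nonempty (by simpa [← sq] using hcard)
  have := G.card_lettersOf_pair_add_card_le hcard hu hij
  have := card_pos.2 hpos
  omega

lemma four_mul_card_le [DecidableEq V] [DecidableEq α] {u v : V} (G : ThreeServerGame V α)
    (hα : 3 ≤ Fintype.card α) (huv : u ≠ v)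
    (hle : ∑ i, #(lettersOf (G.decSingle i (G.Y u) (G.Z u)) u) ≤
      ∑ i, #(lettersOf (G.decSingle i (G.Y u) (G.Z u)) v)) :
    4 * Fintype.card V ≤ 3 * (Fintype.card α + 1) ^ 2 + 4 * #{c |
      ∀ p : Fin 3 × Fin 3, p.1 < p.2 →
        (G.X p.1 u c, G.X p.2 u c) ∈ lettersOf (G.decPair p.1 p.2 (G.Y u)) u} := by
  have hsingle (i : Fin 3) :=
    (G.decodesRow_single i u).card_add_card_lettersOf_add_card_lettersOf_le huv
  have hcolumns := card_le_of_decodesRow_pairs (x := fun i ↦ G.X i u)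
    (fun i j hij ↦ G.decodesRow_pair i j hij.ne u)
    fun i ↦ lettersOf (G.decSingle i (G.Y u) (G.Z u)) u
  have := four_mul_sum_add_le (by omega) hsingle hle
  omega

theorem exists_four_mul_card_le (G : ThreeServerGame V α) (hα : 3 ≤ Fintype.card α)
    (hcard : Fintype.card α ^ 2 < Fintype.card V) :
    ∃ T, T ^ 2 ≤ (Fintype.card α ^ 2 + Fintype.card α - Fintype.card V) ^ 3 ∧
      4 * Fintype.card V ≤ 3 * (Fintype.card α + 1) ^ 2 + 4 * T := by
  classical
  obtain ⟨u, v, huv, hY, hZ, hu⟩ := G.exists_ne_rows hcard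
  wlog hle : ∑ i, #(lettersOf (G.decSingle i (G.Y u) (G.Z u)) u) ≤
      ∑ i, #(lettersOf (G.decSingle i (G.Y u) (G.Z u)) v) generalizing u v
  · exact this v u huv.symm hY.symm hZ.symm (by rwa [← hY])
      (by rw [← hY, ← hZ]; exact (not_le.1 hle).le)
  refine ⟨_, (sq_card_columns_le_prod_card_lettersOf (G.injective_X u)
    fun i j ↦ G.decPair i j (G.Y u)).trans ?_, G.four_mul_card_le hα huv hle⟩
  have hpair {i j : Fin 3} (hij : i ≠ j) :=
    Nat.le_sub_of_add_le (G.card_lettersOf_pair_add_card_le hcard hu hij)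
  rw [pow_succ, sq]
  gcongr <;> exact hpair (by decide)

end ThreeServerGame

lemma eq_of_sq_lt_two_pow {q K : ℕ} (hq : q < 30) (hlt : q ^ 2 < 2 ^ K) (hlt' : 2 ^ K < q ^ 2 + q) :
    q = 11 ∧ K = 7 := by
  have hK : K < 10 := by
    refine (Nat.pow_lt_pow_iff_right (by norm_num : 1 < 2)).1 (hlt'.trans ?_)
    nlinarith
  interval_cases K <;> interval_cases q <;> simp_all

lemma le_sq_of_four_mul_le {q M T : ℕ} (hq : 30 ≤ q) (hT : T ^ 2 ≤ (q ^ 2 + q - M) ^ 3)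
    (hM : 4 * M ≤ 3 * (q + 1) ^ 2 + 4 * T) : M ≤ q ^ 2 := by
  by_contra! hlt
  obtain ⟨k, rfl⟩ := Nat.exists_eq_add_of_le' (show 1 ≤ q by omega)
  have hTk : T ^ 2 ≤ k ^ 3 := hT.trans (Nat.pow_le_pow_left (by omega) 3)
  have hkT : 3 * k ^ 2 ≤ 16 * T := by nlinarith
  have hkpow : 9 * k ^ 4 ≤ 256 * k ^ 3 := by
    calc 9 * k ^ 4 = (3 * k ^ 2) ^ 2 := by ring
      _ ≤ (16 * T) ^ 2 := Nat.pow_le_pow_left hkT 2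
      _ = 256 * T ^ 2 := by ring
      _ ≤ 256 * k ^ 3 := by gcongr
  have hk : 9 * k ≤ 256 := by
    have : 0 < k ^ 3 := pow_pos (by omega) 3
    nlinarith
  omega

/-- The counting bound settles large `q`. No power of two lies in the remaining gap
`q ^ 2 < 2 ^ K < q ^ 2 + q` for small `q`, except for `q = 11`, where the same bound suffices. -/
theorem ThreeServerGame.card_le_sq [Fintype V] [Fintype α] (G : ThreeServerGame V α) {K : ℕ}
    (hV : Fintype.card V = 2 ^ K) : Fintype.card V ≤ Fintype.card α ^ 2 := by
  by_contra! hcard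
  have hlt := G.card_lt_sq_add hcard
  have hcolumns := fun hα ↦ G.exists_four_mul_card_le hα hcard
  rw [hV] at *
  generalize Fintype.card α = q at *
  obtain hq | hq := lt_or_ge q 30
  · obtain ⟨rfl, rfl⟩ := eq_of_sq_lt_two_pow hq hcard hlt
    obtain ⟨T, hT, hle⟩ := hcolumns (by norm_num)
    norm_num at hT hle
    nlinarith
  · obtain ⟨T, hT, hle⟩ := hcolumns (by omega)
    exact hcard.not_ge (le_sq_of_four_mul_le hq hT hle)

end Game

section Chain

variable {V : Type*} [Fintype V] [DecidableEq V]

/-- The pairs of values of the two versions for which a decoder, whose output in the `t`-th state is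
`D t`, switches from the first to the second version between the states `t` and `t + 1`. -/
def switchPairs (D : ℕ → V → V → Option V) (t : ℕ) : Finset (V × V) :=
  {p | D t p.1 p.2 = some p.1 ∧ D (t + 1) p.1 p.2 = some p.2}

@[simp]
lemma mem_switchPairs {D : ℕ → V → V → Option V} {t : ℕ} {p : V × V} :
    p ∈ switchPairs D t ↔ D t p.1 p.2 = some p.1 ∧ D (t + 1) p.1 p.2 = some p.2 := by
  simp [switchPairs]

/-- Pairs of equal values are counted `c` times, all others at least once. -/
theorem card_sq_add_le_sum_card_switchPairs {D : ℕ → V → V → Option V} {c : ℕ} (hc : 1 ≤ c)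
    (hD : ∀ t ≤ c, ∀ a b, D t a b = some a ∨ D t a b = some b) (hD₀ : ∀ a b, D 0 a b = some a)
    (hDc : ∀ a b, D c a b = some b) :
    Fintype.card V ^ 2 + (c - 1) * Fintype.card V ≤ ∑ t ∈ range c, #(switchPairs D t) := by
  have hswitch (p : V × V) :
      1 + (if p.1 = p.2 then c - 1 else 0) ≤ #{t ∈ range c | p ∈ switchPairs D t} := by
    obtain ⟨a, b⟩ := p
    split_ifs with hab
    · obtain rfl : a = b := hab
      have : {t ∈ range c | (a, a) ∈ switchPairs D t} = range c :=
        filter_true_of_mem fun t ht ↦ by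
          have hDa {t} (ht : t ≤ c) : D t a a = some a := or_self_iff.1 (hD t ht a a)
          simp [hDa (mem_range.1 ht).le, hDa (mem_range.1 ht : t + 1 ≤ c)]
      rw [this, card_range]
      omega
    · have hex : ∃ t, D t a b = some b := ⟨c, hDc a b⟩
      obtain ⟨t, ht⟩ : ∃ t, Nat.find hex = t + 1 :=
        Nat.exists_eq_succ_of_ne_zero fun h ↦ hab <| by
          simpa [hD₀] using (Nat.find_eq_zero hex).1 h
      have htc : t < c := by have := Nat.find_min' hex (hDc a b); omega
      refine card_pos.2 ⟨t, mem_filter.2 ⟨mem_range.2 htc, mem_switchPairs.2 ⟨?_, ?_⟩⟩⟩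
      · exact (hD t htc.le a b).resolve_right (Nat.find_min hex (by omega))
      · exact ht ▸ Nat.find_spec hex
  have hdiag : ∑ p : V × V, (1 + if p.1 = p.2 then c - 1 else 0) =
      Fintype.card V ^ 2 + (c - 1) * Fintype.card V := by
    simp [sum_add_distrib, Fintype.sum_prod_type, sq, mul_comm]
  calc Fintype.card V ^ 2 + (c - 1) * Fintype.card V
      ≤ ∑ p : V × V, #{t ∈ range c | p ∈ switchPairs D t} :=
        hdiag ▸ sum_le_sum fun p _ ↦ hswitch p
    _ = ∑ t ∈ range c, #{p | p ∈ switchPairs D t} :=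
        sum_card_bipartiteAbove_eq_sum_card_bipartiteBelow fun p t ↦ p ∈ switchPairs D t
    _ = ∑ t ∈ range c, #(switchPairs D t) := by simp only [filter_univ_mem]

end Chain

section Arithmetic

lemma three_mul_add_two_le_two_pow {t : ℕ} (ht : 4 ≤ t) : 3 * t + 2 ≤ 2 ^ t := by
  induction t, ht using Nat.le_induction with
  | base => norm_num
  | succ t _ ih => rw [pow_succ]; omega

lemma three_mul_add_two_le_five_pow {t : ℕ} (ht : 1 ≤ t) : 3 * t + 2 ≤ 5 ^ t := by
  induction t, ht using Nat.le_induction with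
  | base => norm_num
  | succ t _ ih => rw [pow_succ]; omega

lemma sub_one_le_pow {c q : ℕ} (hc : 4 ≤ c) (hq : 2 ≤ q) (hcq : 5 ≤ q ∨ 13 ≤ c) :
    c - 1 ≤ q ^ ((c - 1) / 3) := by
  have hct : c - 1 ≤ 3 * ((c - 1) / 3) + 2 := by omega
  obtain hq | hc := hcq
  · exact (hct.trans (three_mul_add_two_le_five_pow (by omega))).trans (Nat.pow_le_pow_left hq _)
  · exact (hct.trans (three_mul_add_two_le_two_pow (by omega))).trans (Nat.pow_le_pow_left hq _)

lemma sq_two_pow_le_pow_of_small {c q K : ℕ} (hc : 4 ≤ c) (hc' : c < 13) (hq : 2 ≤ q) (hq' : q < 5)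
    (h : (2 ^ K) ^ 2 < (c - 1) * q ^ (c + 1)) : (2 ^ K) ^ 2 ≤ q ^ (2 * c - 2 * c / 3) := by
  have hK : K < 15 := by
    have : (c - 1) * q ^ (c + 1) ≤ 11 * 4 ^ 13 := by
      gcongr <;> omega
    by_contra! hK
    have : (2 ^ 15) ^ 2 ≤ (2 ^ K) ^ 2 := by gcongr; norm_num
    norm_num at *
    omega
  interval_cases c <;> interval_cases q <;> revert h <;> decide +revert

/-- The left side is at most `max q (c - 1) * q ^ (c + 1)`, which suffices apart from finitely many
pairs `(c, q)`. -/
theorem sq_two_pow_le_pow {c q K : ℕ} (hc : 4 ≤ c) (hq : 0 < q)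
    (hmul : (2 ^ K) ^ 2 + (c - 1) * 2 ^ K ≤ 2 ^ K * q + (c - 1) * q ^ (c + 1))
    (hpow : (2 ^ K) ^ 2 + (c - 1) * 2 ^ K ≤ q ^ (c + 1) + (c - 1) * q ^ (c + 1)) :
    (2 ^ K) ^ 2 ≤ q ^ (2 * c - 2 * c / 3) := by
  have hexp : 2 * c - 2 * c / 3 = (c - 1) / 3 + (c + 1) := by omega
  obtain ⟨k, rfl⟩ := Nat.exists_eq_add_of_le' (show 1 ≤ c by omega)
  rw [Nat.add_sub_cancel] at *
  have hM : 0 < 2 ^ K := by positivity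
  obtain hkq | hqk := le_or_gt k q
  · have hsq : (2 ^ K) ^ 2 ≤ q * q ^ (k + 2) := by
      obtain rfl | hkq := hkq.eq_or_lt
      · linarith
      · nlinarith [Nat.mul_le_mul_right (q ^ (k + 2)) hkq]
    calc (2 ^ K) ^ 2 ≤ q * q ^ (k + 2) := hsq
      _ ≤ q ^ (k / 3) * q ^ (k + 2) := by
        gcongr
        exact Nat.le_self_pow (by omega) q
      _ = q ^ (2 * (k + 1) - 2 * (k + 1) / 3) := by rw [hexp, ← pow_add]
  · have hsq : (2 ^ K) ^ 2 < k * q ^ (k + 2) := by nlinarith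
    obtain rfl | hq : q = 1 ∨ 2 ≤ q := by omega
    · simp only [one_pow] at *
      nlinarith
    by_cases hlarge : 5 ≤ q ∨ 13 ≤ k + 1
    · calc (2 ^ K) ^ 2 ≤ k * q ^ (k + 2) := hsq.le
        _ ≤ q ^ (k / 3) * q ^ (k + 2) := by
          gcongr
          exact sub_one_le_pow hc hq hlarge
        _ = q ^ (2 * (k + 1) - 2 * (k + 1) / 3) := by rw [hexp, ← pow_add]
    · exact sq_two_pow_le_pow_of_small hc (by omega) hq (by omega) hsq

end Arithmetic

lemma mem_received {n ν : ℕ} [NeZero n] {S : ZMod n → Finset (Fin ν)} {u : Fin ν} {z : ZMod n} :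
    z ∈ received n ν S u ↔ u ∈ S z := by simp [received]

namespace MVCode

variable {n cW cR h K q : ℕ} [NeZero n] (code : MVCode n cW cR 2 h K q)
  {S S' : ZMod n → Finset (Fin 2)} {T : Finset (ZMod n)} {z : ZMod n} {a a' b b' : Fin K → Bool}

/-- What the servers in `T` decode in the state `S` when the two versions have the values `a` and
`b`. -/
def output (S : ZMod n → Finset (Fin 2)) (T : Finset (ZMod n)) (a b : Fin K → Bool) :
    Option (Fin K → Bool) :=
  code.dec S T fun z ↦ code.enc z S ![a, b]

lemma enc_congr (ha : 0 ∈ S z → a = a') (hb : 1 ∈ S z → b = b') :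
    code.enc z S ![a, b] = code.enc z S ![a', b'] := by
  refine code.enc_local_word z S _ _ fun u hu ↦ ?_
  fin_cases u
  exacts [ha hu, hb hu]

lemma output_congr (henc : ∀ z ∈ T, code.enc z S ![a, b] = code.enc z S ![a', b']) :
    code.output S T a b = code.output S T a' b' :=
  code.dec_local S T _ _ henc

lemma output_eq_or_eq (hT : #T = cR) (h₀ : cW ≤ #(received n 2 S 0)) (a b : Fin K → Bool) :
    code.output S T a b = some a ∨ code.output S T a b = some b := by
  obtain ⟨u, -, hu⟩ := code.dec_correct S ![a, b] T hT ⟨0, h₀⟩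
  fin_cases u
  exacts [.inl hu, .inr hu]

lemma output_eq_snd (hT : #T = cR) (h₁ : cW ≤ #(received n 2 S 1)) (a b : Fin K → Bool) :
    code.output S T a b = some b := by
  obtain ⟨u, hle, hu⟩ := code.dec_correct S ![a, b] T hT ⟨1, h₁⟩
  obtain rfl : u = 1 := le_antisymm (Fin.le_last u) (hle 1 h₁)
  exact hu

lemma output_eq_fst (hT : #T = cR) (h₀ : cW ≤ #(received n 2 S 0)) (h₁ : ∀ z ∈ T, 1 ∉ S z)
    (a b : Fin K → Bool) : code.output S T a b = some a := by
  rw [code.output_congr (a' := a) (b' := a) fun z hz ↦ code.enc_congr (by simp) (by simp [h₁ z hz])]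
  exact or_self_iff.1 (code.output_eq_or_eq hT h₀ a a)

end MVCode

section Ring

variable {n h : ℕ}

lemma self_mem_nbhd (i : ZMod n) : i ∈ nbhd n h i :=
  mem_image.2 ⟨0, by simp, by simp⟩

variable [NeZero n]

/-- The two last cases are those in which the neighborhood wraps around `0`. -/
lemma val_of_mem_nbhd {i j : ZMod n} (hj : j ∈ nbhd n h i) :
    j.val ≤ i.val + h ∧ i.val ≤ j.val + h ∨ n + i.val ≤ j.val + h ∨ n + j.val ≤ i.val + h := by
  obtain ⟨d, hd, rfl⟩ := mem_image.1 hj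
  rw [mem_Icc] at hd
  obtain ⟨t, ht⟩ : (n : ℤ) ∣ (i + (d : ZMod n)).val - i.val - d := by
    rw [← ZMod.intCast_zmod_eq_zero_iff_dvd]
    simp
  obtain rfl | ht' | ht' : t = 0 ∨ 1 ≤ t ∨ t ≤ -1 := by omega
  · omega
  · have : (n : ℤ) ≤ n * t := le_mul_of_one_le_right (by positivity) ht'
    omega
  · have : (n : ℤ) * t ≤ -n := by nlinarith
    omega

/-- The servers numbered from `x` to `y - 1`. -/
def arc (n x y : ℕ) [NeZero n] : Finset (ZMod n) := {z | x ≤ z.val ∧ z.val < y}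

@[simp]
lemma mem_arc {x y : ℕ} {z : ZMod n} : z ∈ arc n x y ↔ x ≤ z.val ∧ z.val < y := by simp [arc]

lemma card_arc {x y : ℕ} (hy : y ≤ n) : #(arc n x y) = y - x := by
  rw [← Nat.card_Ico x y]
  refine card_nbij ZMod.val (fun z hz ↦ by simpa using hz) (ZMod.val_injective n).injOn
    fun k hk ↦ ?_
  rw [coe_Ico, Set.mem_Ico] at hk
  have hval := ZMod.val_cast_of_lt (hk.2.trans_le hy)
  exact ⟨k, by simpa [hval] using hk, hval⟩

end Ring

section ChainBound

variable {c m h K q t : ℕ} [NeZero (c + 4 * m)]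

/-- The `t`-th state of the chain: the first version is just complete, and the second one has
reached the first `2 * m + t` servers. -/
def chainState (c m t : ℕ) (z : ZMod (c + 4 * m)) : Finset (Fin 2) :=
  if z.val < t + 2 * m then {0, 1} else if z.val < c + 2 * m then {0} else ∅

/-- The servers read in the `t`-th state of the chain: `t` servers which are too far from the border
of the second version to know `t`, and all the servers which lack the second version. -/
def chainReads (c m t : ℕ) [NeZero (c + 4 * m)] : Finset (ZMod (c + 4 * m)) :=
  arc _ m (m + t) ∪ arc _ (t + 2 * m) (c + 4 * m)

lemma card_chainReads (ht : t ≤ c) : #(chainReads c m t) = c + 2 * m := by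
  have hdisj : Disjoint (arc (c + 4 * m) m (m + t)) (arc _ (t + 2 * m) (c + 4 * m)) :=
    disjoint_left.2 fun z hz hz' ↦ by
      rw [mem_arc] at hz hz'
      omega
  rw [chainReads, card_union_of_disjoint hdisj, card_arc (by omega), card_arc le_rfl]
  omega

lemma received_chainState_zero (ht : t ≤ c) :
    received _ 2 (chainState c m t) 0 = arc _ 0 (c + 2 * m) := by
  ext z
  simp only [mem_received, chainState, mem_arc, zero_le, true_and]
  split_ifs <;> simp <;> omega

lemma received_chainState_one : received _ 2 (chainState c m t) 1 = arc _ 0 (t + 2 * m) := by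
  ext z
  simp only [mem_received, chainState, mem_arc, zero_le, true_and]
  split_ifs <;> simp <;> omega

namespace MVCode

variable (code : MVCode (c + 4 * m) (c + 2 * m) (c + 2 * m) 2 h K q) {a a' b b' : Fin K → Bool}

/-- The output of the decoder in the `t`-th state of the chain. -/
def chainOutput (t : ℕ) : (Fin K → Bool) → (Fin K → Bool) → Option (Fin K → Bool) :=
  code.output (chainState c m t) (chainReads c m t)

lemma chainOutput_eq_or_eq (ht : t ≤ c) (a b : Fin K → Bool) :
    code.chainOutput t a b = some a ∨ code.chainOutput t a b = some b :=
  code.output_eq_or_eq (card_chainReads ht)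
    (by rw [received_chainState_zero ht, card_arc (by omega), Nat.sub_zero]) a b

lemma chainOutput_zero (a b : Fin K → Bool) : code.chainOutput 0 a b = some a := by
  refine code.output_eq_fst (card_chainReads c.zero_le)
    (by rw [received_chainState_zero c.zero_le, card_arc (by omega), Nat.sub_zero])
    (fun z hz ↦ ?_) a b
  have hz : 2 * m ≤ z.val := by
    simp only [chainReads, mem_union, mem_arc] at hz
    omega
  simp only [chainState]
  split_ifs <;> simp
  omega

lemma chainOutput_self (a b : Fin K → Bool) : code.chainOutput c a b = some b :=
  code.output_eq_snd (card_chainReads le_rfl)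
    (by rw [received_chainState_one, card_arc (by omega), Nat.sub_zero]) a b

/-- The server `z` sees the same neighborhood in the states `t` and `c` of the chain. -/
lemma enc_chainState (hh : h ≤ m) (ht : t ≤ c) {z : ZMod (c + 4 * m)} (hz : z ∈ arc _ m (m + t))
    (W : Fin 2 → Fin K → Bool) :
    code.enc z (chainState c m t) W = code.enc z (chainState c m c) W := by
  refine code.enc_local_state z _ _ W fun j hj ↦ ?_
  have hjn := j.val_lt
  have hj : j.val < t + 2 * m := by
    have := val_of_mem_nbhd hj
    rw [mem_arc] at hz
    omega
  simp [chainState, hj, show j.val < c + 2 * m by omega]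

lemma chainOutput_congr (hh : h ≤ m) (ht : t ≤ c)
    (hinner : ∀ z ∈ arc _ m (m + t),
      code.enc z (chainState c m c) ![a, b] = code.enc z (chainState c m c) ![a', b'])
    (houter : ∀ z ∈ arc _ (t + 2 * m) (c + 2 * m),
      code.enc z (chainState c m t) ![a, b] = code.enc z (chainState c m t) ![a', b']) :
    code.chainOutput t a b = code.chainOutput t a' b' := by
  refine code.output_congr fun z hz ↦ ?_
  obtain hz | hz := mem_union.1 hz
  · simpa only [code.enc_chainState hh ht hz] using hinner z hz
  · by_cases hzc : z.val < c + 2 * m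
    · exact houter z (by simp_all)
    · rw [mem_arc] at hz
      have : chainState c m t z = ∅ := by simp [chainState, hzc, show ¬z.val < t + 2 * m by omega]
      exact code.enc_congr (by simp [this]) (by simp [this])

lemma chainOutput_congr_snd (hh : h ≤ m) (ht : t ≤ c)
    (hinner : ∀ z ∈ arc _ m (m + t),
      code.enc z (chainState c m c) ![a, b] = code.enc z (chainState c m c) ![a, b']) :
    code.chainOutput t a b = code.chainOutput t a b' := by
  refine code.chainOutput_congr hh ht hinner fun z hz ↦ code.enc_congr (by simp) fun h₁ ↦ ?_
  have : z ∈ received _ 2 (chainState c m t) 1 := mem_received.2 h₁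
  rw [received_chainState_one] at this
  simp only [mem_arc] at hz this
  omega

lemma card_switchPairs_chainOutput_le_pow (hh : h ≤ m) (ht : t < c) :
    #(switchPairs code.chainOutput t) ≤ q ^ (c + 1) := by
  set I := arc (c + 4 * m) m (m + (t + 1)) with hI
  set J := arc (c + 4 * m) (t + 2 * m) (c + 2 * m) with hJ
  let symbols (p : (Fin K → Bool) × (Fin K → Bool)) : (I → Fin q) × (J → Fin q) :=
    (fun z ↦ code.enc z (chainState c m c) ![p.1, p.2],
      fun z ↦ code.enc z (chainState c m t) ![p.1, p.2])
  have hinj : Set.InjOn symbols (switchPairs code.chainOutput t) := by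
    rintro ⟨a, b⟩ hab ⟨a', b'⟩ hab' heq
    simp only [symbols, Prod.mk.injEq, funext_iff, Subtype.forall] at heq
    simp only [mem_coe, mem_switchPairs] at hab hab'
    have ha := code.chainOutput_congr hh ht.le (fun z hz ↦ heq.1 z (by simp_all; omega)) heq.2
    obtain rfl : a = a' := Option.some_injective _ (hab.1 ▸ hab'.1 ▸ ha)
    have hb := code.chainOutput_congr_snd hh ht heq.1
    rw [hab.2, hab'.2] at hb
    simpa using hb
  calc #(switchPairs code.chainOutput t) ≤ Fintype.card ((I → Fin q) × (J → Fin q)) :=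
        card_le_card_of_injOn symbols (fun _ _ ↦ mem_univ _) hinj
    _ = q ^ (c + 1) := by
      simp only [Fintype.card_prod, Fintype.card_fun, Fintype.card_fin, Fintype.card_coe, hI, hJ]
      rw [card_arc (by omega), card_arc (by omega), ← pow_add]
      congr 1
      omega

lemma card_switchPairs_chainOutput_zero_le (hh : h ≤ m) (hc : 0 < c) :
    #(switchPairs code.chainOutput 0) ≤ 2 ^ K * q := by
  set I := arc (c + 4 * m) m (m + 1)
  have hinj : Set.InjOn (fun p : (Fin K → Bool) × (Fin K → Bool) ↦
      (p.1, fun z : I ↦ code.enc z (chainState c m c) ![p.1, p.2]))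
      (switchPairs code.chainOutput 0) := by
    rintro ⟨a, b⟩ hab ⟨a', b'⟩ hab' heq
    simp only [Prod.mk.injEq, funext_iff, Subtype.forall] at heq
    simp only [mem_coe, mem_switchPairs] at hab hab'
    obtain rfl : a = a' := funext heq.1
    have hb := code.chainOutput_congr_snd (t := 1) hh hc heq.2
    rw [hab.2, hab'.2] at hb
    simpa using hb
  refine (card_le_card_of_injOn _ (fun _ _ ↦ mem_univ _) hinj).trans_eq ?_
  have hI : #I = 1 := by rw [card_arc (by omega)]; omega
  simp [hI]

theorem sq_two_pow_le_of_chain (code : MVCode (c + 4 * m) (c + 2 * m) (c + 2 * m) 2 h K q)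
    (hh : h ≤ m) (hc : 4 ≤ c) (hq : 0 < q) :
    (2 ^ K) ^ 2 ≤ q ^ (2 * c - 2 * c / 3) := by
  have hsum := card_sq_add_le_sum_card_switchPairs (D := code.chainOutput) (by omega)
    (fun t ht ↦ code.chainOutput_eq_or_eq ht) code.chainOutput_zero code.chainOutput_self
  obtain ⟨k, rfl⟩ := Nat.exists_eq_add_of_le' (show 1 ≤ c by omega)
  have hrest : ∑ t ∈ range k, #(switchPairs code.chainOutput (t + 1)) ≤ k * q ^ (k + 1 + 1) := by
    refine (sum_le_card_nsmul _ _ _ fun t ht ↦ ?_).trans_eq (by rw [card_range, smul_eq_mul])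
    exact code.card_switchPairs_chainOutput_le_pow hh (by simpa using ht)
  have hcard : Fintype.card (Fin K → Bool) = 2 ^ K := by simp
  rw [sum_range_succ', hcard] at hsum
  have hfirst := code.card_switchPairs_chainOutput_zero_le hh (by omega)
  have hfirst' := code.card_switchPairs_chainOutput_le_pow (t := 0) hh (by omega)
  refine sq_two_pow_le_pow hc hq ?_ ?_ <;> rw [Nat.add_sub_cancel] at * <;> omega

end MVCode

end ChainBound

section ThreeServers

/-- The state in which the servers of `A` received the first version, and those of `A \ J` also the
second one. -/
def partialState {n : ℕ} (A J : Finset (ZMod n)) (z : ZMod n) : Finset (Fin 2) :=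
  if z ∈ A then if z ∈ J then {0} else {0, 1} else ∅

namespace MVCode

variable {n cW cR h K q : ℕ} [NeZero n] (code : MVCode n cW cR 2 h K q)
  {A J J' T : Finset (ZMod n)} {z : ZMod n}

lemma enc_partialState_congr (hJ : ∀ j ∈ nbhd n h z, j ∈ J ↔ j ∈ J')
    (W : Fin 2 → Fin K → Bool) :
    code.enc z (partialState A J) W = code.enc z (partialState A J') W :=
  code.enc_local_state z _ _ W fun j hj ↦ by simp [partialState, hJ j hj]

lemma enc_partialState_of_mem (hz : z ∈ J) (a b b' : Fin K → Bool) :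
    code.enc z (partialState A J) ![a, b] = code.enc z (partialState A J) ![a, b'] :=
  code.enc_congr (by simp) fun h₁ ↦ by
    simp only [partialState, hz, if_true] at h₁
    split_ifs at h₁ <;> simp at h₁

lemma output_partialState_congr {a b a' b' : Fin K → Bool}
    (henc : ∀ z ∈ T, code.enc z (partialState A J) ![a, b] =
      code.enc z (partialState A J) ![a', b']) :
    code.output (partialState A J) (T ∪ Aᶜ) a b =
      code.output (partialState A J) (T ∪ Aᶜ) a' b' := by
  refine code.output_congr fun z hz ↦ ?_
  obtain hz | hz := mem_union.1 hz
  · exact henc z hz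
  · have hempty : partialState A J z = ∅ := if_neg (mem_compl.1 hz)
    exact code.enc_congr (by simp [hempty]) (by simp [hempty])

lemma card_union_compl (hTA : T ⊆ A) : #(T ∪ Aᶜ) = #T + #Aᶜ :=
  card_union_of_disjoint (disjoint_compl_right.mono_left hTA)

lemma card_le_card_received_partialState : #A ≤ #(received n 2 (partialState A J) 0) :=
  card_le_card fun z hz ↦ mem_received.2 <| by
    simp only [partialState, hz, if_true]
    split_ifs <;> simp

/-- A decoder may be applied to any letters which determine the symbols stored by the servers of
`T`, as the servers outside `A` always store the same symbols. -/
lemma exists_decoder_partialState {β : Type*} (hA : cW ≤ #A) (hTA : T ⊆ A) (hT : #T + #Aᶜ = cR)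
    (J : Finset (ZMod n)) (letters : (Fin K → Bool) → (Fin K → Bool) → β)
    (hletters : ∀ a b a' b', letters a b = letters a' b' → ∀ z ∈ T,
      code.enc z (partialState A J) ![a, b] = code.enc z (partialState A J) ![a', b']) :
    ∃ d : β → Option (Fin K → Bool), ∀ a, DecodesRow d a (letters a) := by
  have hfactors : (Function.uncurry (code.output (partialState A J) (T ∪ Aᶜ))).FactorsThrough
      (Function.uncurry letters) := fun p p' hp ↦
    code.output_partialState_congr (hletters p.1 p.2 p'.1 p'.2 hp)
  obtain ⟨d, hd⟩ := (Function.factorsThrough_iff _).1 hfactors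
  refine ⟨d, fun a b ↦ ?_⟩
  have hout : code.output (partialState A J) (T ∪ Aᶜ) a b = d (letters a b) := congrFun hd (a, b)
  rw [← hout]
  exact code.output_eq_or_eq (by rw [card_union_compl hTA, hT])
    (hA.trans card_le_card_received_partialState) a b

lemma injective_enc_partialState (hA : cW ≤ #A) (hTA : T ⊆ A) (hT : #T + #Aᶜ = cR)
    (a : Fin K → Bool) :
    Function.Injective fun b (z : T) ↦ code.enc z (partialState A ∅) ![a, b] := by
  intro b b' heq
  have hcongr : code.output (partialState A ∅) (T ∪ Aᶜ) a b =
      code.output (partialState A ∅) (T ∪ Aᶜ) a b' :=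
    code.output_partialState_congr fun z hz ↦ congrFun heq ⟨z, hz⟩
  have hcW : cW ≤ #(received n 2 (partialState A ∅) 1) :=
    hA.trans <| card_le_card fun z hz ↦ mem_received.2 <| by simp [partialState, hz]
  have hcard : #(T ∪ Aᶜ) = cR := by rw [card_union_compl hTA, hT]
  rw [code.output_eq_snd hcard hcW, code.output_eq_snd hcard hcW] at hcongr
  exact Option.some_injective _ hcongr

lemma exists_decoder_pair (hA : cW ≤ #A) (hcR : 3 + #Aᶜ = cR) {y s₁ s₂ : ZMod n}
    (hTA : {y, s₁, s₂} ⊆ A) (hs : s₁ ≠ s₂) (hy₁ : y ∉ nbhd n h s₁) (hy₂ : y ∉ nbhd n h s₂) :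
    ∃ d : Fin q × Fin q × Fin q → Option (Fin K → Bool), ∀ a, DecodesRow d a fun b ↦
      (code.enc y (partialState A {y}) ![a, a], code.enc s₁ (partialState A ∅) ![a, b],
        code.enc s₂ (partialState A ∅) ![a, b]) := by
  have hsy₁ : y ≠ s₁ := fun h ↦ hy₁ (h ▸ self_mem_nbhd _)
  have hsy₂ : y ≠ s₂ := fun h ↦ hy₂ (h ▸ self_mem_nbhd _)
  refine code.exists_decoder_partialState hA hTA
    (by rw [card_eq_three.2 ⟨y, s₁, s₂, hsy₁, hsy₂, hs, rfl⟩, hcR]) {y} _ fun a b a' b' heq ↦ ?_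
  simp only [Prod.mk.injEq] at heq
  simpa [code.enc_partialState_of_mem (mem_singleton_self y) a b a,
    code.enc_partialState_of_mem (mem_singleton_self y) a' b' a',
    code.enc_partialState_congr (J := {y}) (J' := ∅) (z := s₁) (by grind),
    code.enc_partialState_congr (J := {y}) (J' := ∅) (z := s₂) (by grind)] using heq

lemma exists_decoder_single (hA : cW ≤ #A) (hcR : 3 + #Aᶜ = cR) {y w s : ZMod n}
    (hTA : {y, w, s} ⊆ A) (hy : y ∉ nbhd n h s) (hw : w ∉ nbhd n h s) (hwy : w ∉ nbhd n h y) :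
    ∃ d : Fin q × Fin q × Fin q → Option (Fin K → Bool), ∀ a, DecodesRow d a fun b ↦
      (code.enc y (partialState A {y}) ![a, a], code.enc w (partialState A {y, w}) ![a, a],
        code.enc s (partialState A ∅) ![a, b]) := by
  have hsy : y ≠ s := fun h ↦ hy (h ▸ self_mem_nbhd _)
  have hsw : w ≠ s := fun h ↦ hw (h ▸ self_mem_nbhd _)
  have hyw : y ≠ w := fun h ↦ hwy (h ▸ self_mem_nbhd _)
  refine code.exists_decoder_partialState hA hTA
    (by rw [card_eq_three.2 ⟨y, w, s, hyw, hsy, hsw, rfl⟩, hcR]) {y, w} _ fun a b a' b' heq ↦ ?_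
  simp only [Prod.mk.injEq] at heq
  simpa [code.enc_partialState_of_mem (J := {y, w}) (z := w) (by simp) a b a,
    code.enc_partialState_of_mem (J := {y, w}) (z := w) (by simp) a' b' a',
    code.enc_partialState_congr (J := {y, w}) (J' := {y}) (z := y) (by grind),
    code.enc_partialState_of_mem (mem_singleton_self y) a b a,
    code.enc_partialState_of_mem (mem_singleton_self y) a' b' a',
    code.enc_partialState_congr (J := {y, w}) (J' := ∅) (z := s) (by grind)] using heq

/-- The inner servers `s i` do not notice whether `y` and `w` lack the second version, and `y` does
not notice whether `w` does. -/
theorem nonempty_threeServerGame (code : MVCode n cW cR 2 h K q) (hA : cW ≤ #A)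
    (hcR : 3 + #Aᶜ = cR) {y w : ZMod n} {s : Fin 3 → ZMod n} (hs : Function.Injective s)
    (hy : y ∈ A) (hw : w ∈ A) (hsA : ∀ i, s i ∈ A) (hys : ∀ i, y ∉ nbhd n h (s i))
    (hws : ∀ i, w ∉ nbhd n h (s i)) (hwy : w ∉ nbhd n h y) :
    Nonempty (ThreeServerGame (Fin K → Bool) (Fin q)) := by
  have hX (a : Fin K → Bool) :
      Function.Injective fun b i ↦ code.enc (s i) (partialState A ∅) ![a, b] := by
    refine fun b b' heq ↦ code.injective_enc_partialState (T := univ.image s) hA (by grind)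
      (by rw [card_image_of_injective _ hs, card_univ, Fintype.card_fin, hcR]) a ?_
    funext ⟨z, hz⟩
    obtain ⟨i, -, rfl⟩ := mem_image.1 hz
    exact congrFun heq i
  have hpair (i j : Fin 3) (hij : i ≠ j) :=
    code.exists_decoder_pair hA hcR (y := y) (by grind) (hs.ne hij) (hys i) (hys j)
  have hsingle (i : Fin 3) :=
    code.exists_decoder_single hA hcR (y := y) (w := w) (by grind) (hys i) (hws i) hwy
  choose decPair hdecPair using hpair
  choose decSingle hdecSingle using hsingle
  exact ⟨{
    X := fun i a b ↦ code.enc (s i) (partialState A ∅) ![a, b]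
    Y := fun a ↦ code.enc y (partialState A {y}) ![a, a]
    Z := fun a ↦ code.enc w (partialState A {y, w}) ![a, a]
    decPair := fun i j y p ↦ if hij : i ≠ j then decPair i j hij (y, p) else none
    decSingle := fun i y w x ↦ decSingle i (y, w, x)
    injective_X := hX
    decodesRow_pair := fun i j hij a ↦ by
      simp only [dif_pos hij]
      exact hdecPair i j hij a
    decodesRow_single := hdecSingle }⟩

theorem two_pow_le_sq_of_three {m : ℕ} [NeZero (3 + 4 * m)] (hm : 2 ≤ m) (hh : h ≤ m)
    (code : MVCode (3 + 4 * m) (3 + 2 * m) (3 + 2 * m) 2 h K q) : 2 ^ K ≤ q ^ 2 := by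
  let server (k : ℕ) : ZMod (3 + 4 * m) := k
  have hval {k : ℕ} (hk : k < 3 + 4 * m) : (server k).val = k := ZMod.val_cast_of_lt hk
  let s (i : Fin 3) : ZMod (3 + 4 * m) := server (2 * m + 2 + i)
  have hs (i : Fin 3) : (s i).val = 2 * m + 2 + i := hval (by omega)
  obtain ⟨A, hA, hcard⟩ : ∃ A, insert (server 0) (insert (server (m + 1)) (univ.image s)) ⊆ A ∧
      #A = 3 + 2 * m := by
    refine exists_superset_card_eq ?_ (by rw [ZMod.card]; omega)
    grw [card_insert_le, card_insert_le, card_image_le, card_univ, Fintype.card_fin]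
    omega
  have hcompl : #A + #Aᶜ = 3 + 4 * m := by rw [card_add_card_compl, ZMod.card]
  simp only [insert_subset_iff, image_subset_iff] at hA
  obtain ⟨G⟩ := code.nonempty_threeServerGame hcard.ge (by omega) (s := s)
    (fun i j hij ↦ Fin.ext (by have := hs i; rw [hij, hs j] at this; omega)) hA.1 hA.2.1
    (fun i ↦ hA.2.2 i (mem_univ i))
    (fun i hi ↦ by have := val_of_mem_nbhd hi; rw [hs, hval (by omega)] at this; omega)
    (fun i hi ↦ by have := val_of_mem_nbhd hi; rw [hs, hval (by omega)] at this; omega)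
    (fun hi ↦ by have := val_of_mem_nbhd hi; rw [hval (by omega), hval (by omega)] at this; omega)
  simpa using G.card_le_sq (by simp : Fintype.card (Fin K → Bool) = 2 ^ K)

end MVCode

end ThreeServers

theorem converse_impossibility_general (n cW h c K q : ℕ) [NeZero n] (hcWn : cW ≤ n)
    (hc : c + n = 2 * cW) (hc3 : 3 ≤ c) (hn : c = 3 → 11 ≤ n) (hdiv : 4 ∣ (n - c))
    (hh : h ≤ (n - c) / 4) (code : MVCode n cW cW 2 h K q) :
    2 ^ K ≤ q ^ ((2 * c + 2) / 3) ∧ 2 ^ (2 * K) ≤ q ^ (2 * c - (2 * c) / 3) := by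
  obtain ⟨m, hm⟩ := hdiv
  obtain ⟨rfl, rfl⟩ : n = c + 4 * m ∧ cW = c + 2 * m := by omega
  have hq : 0 < q := (code.enc 0 (fun _ ↦ ∅) fun _ _ ↦ false).pos
  have hsq : (2 ^ K) ^ 2 ≤ q ^ (2 * c - 2 * c / 3) := by
    obtain rfl | hc4 : c = 3 ∨ 4 ≤ c := by omega
    · calc (2 ^ K) ^ 2 ≤ (q ^ 2) ^ 2 :=
          Nat.pow_le_pow_left (code.two_pow_le_sq_of_three (by omega) (by omega)) 2
        _ = q ^ (2 * 3 - 2 * 3 / 3) := by rw [← pow_mul]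
    · exact code.sq_two_pow_le_of_chain (by omega) hc4 hq
  refine ⟨(Nat.pow_le_pow_iff_left two_ne_zero).1 (hsq.trans ?_), by rwa [mul_comm, pow_mul]⟩
  rw [← pow_mul]
  exact Nat.pow_le_pow_right hq (by omega)

/-- Theorem 4, converse: for `ν = 2`, `c_R = c_W`, `c := 2c_W - n ≥ 3`,
`n ≥ ⌈7c/3⌉ + 4`, `(n-c)/4` an integer and `h ≤ (n-c)/4`, every
`(n, c_W, c_W, 2, h, 2^K, q)` multi-version code with side information satisfies both
`q^⌈2c/3⌉ ≥ 2^K` and `q^(2c - ⌊2c/3⌋) ≥ 2^(2K)`, i.e. its storage cost satisfies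
`log₂ q ≥ max{K/⌈2c/3⌉, 2K/(2c - ⌊2c/3⌋)}`. -/
theorem converse_impossibility (n cW h c K q : ℕ) [NeZero n]
    (hcWn : cW ≤ n) (hc : c + n = 2 * cW) (hc3 : 3 ≤ c)
    (hn : (7 * c + 2) / 3 + 4 ≤ n) (hdiv : 4 ∣ (n - c))
    (hh0 : 0 < h) (hh : h ≤ (n - c) / 4) (h2h : 2 * h + 1 ≤ n)
    (hK : 0 < K) (hq : 0 < q)
    (code : MVCode n cW cW 2 h K q) :
    2 ^ K ≤ q ^ ((2 * c + 2) / 3) ∧ 2 ^ (2 * K) ≤ q ^ (2 * c - (2 * c) / 3) :=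
  converse_impossibility_general n cW h c K q hcWn hc hc3 (by omega) hdiv hh code
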